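/- arXiv:0809.3046 — 2 statements merged into one kernel-verified Lean document; each statement's English description precedes it below -/
import Mathlib

section
/- Let p be a prime number, let σ be the automorphism of ℤ × ℤ given by σ(a,b) = (a+b, b), and let G1 = (ℤ × ℤ) ⋊_σ ℤ be the semidirect product in which 1 ∈ ℤ acts by σ. Then the second group cohomology of G1 with coefficients in ℤ/p regarded as a trivial G1-module is nonzero: H²(G1, ℤ/p) ≠ 0. -/
/-- The automorphism `σ(a,b) = (a+b, b)` of `ℤ × ℤ`. -/
def sigmaAut : (ℤ × ℤ) ≃+ (ℤ × ℤ) where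
  toFun x := (x.1 + x.2, x.2)
  invFun x := (x.1 - x.2, x.2)
  left_inv x := by simp
  right_inv x := by simp
  map_add' x y := by simp [Prod.ext_iff]; ring

/-- `N = ℤ × ℤ`, written multiplicatively. -/
abbrev Nmul : Type := Multiplicative (ℤ × ℤ)

/-- The action of `ℤ` on `N` in which `1` acts by `σ`. -/
def actSigma : Multiplicative ℤ →* MulAut Nmul :=
  zpowersHom (MulAut Nmul) (AddEquiv.toMultiplicative sigmaAut)

/-- `G₁ = (ℤ × ℤ) ⋊_σ ℤ`. -/
abbrev G1 : Type := Nmul ⋊[actSigma] Multiplicative ℤ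

/-!
Given an automorphism `σ` of `N` and a homomorphism `χ : N → A`, the group `(N × A) ⋊ ℤ` in which
`1 ∈ ℤ` acts by `(n, c) ↦ (σ n, c + χ n)` is a central extension of `N ⋊ ℤ` by `A`. If `σ n = n`,
then `n` and the generator of `ℤ` commute in `N ⋊ ℤ`, but the commutator of their lifts is `± χ n`.
In a split central extension the lifts of a commuting pair commute, so `χ n ≠ 0` forces the class
of this extension in `H²(N ⋊ ℤ, A)` to be nonzero. For `G₁`, take `n = (1, 0)` and
`χ (a, b) = a • c` with `c ≠ 0`.
-/

open groupCohomology SemidirectProduct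

universe u v

section TrivialCoefficients

variable {k G A : Type u} [CommRing k] [Group G] [AddCommGroup A] [Module k A]

theorem apply_eq_apply_swap_of_mem_coboundaries₂_trivial {f : G × G → A}
    (hf : f ∈ coboundaries₂ (Rep.trivial k G A)) {g h : G} (hgh : Commute g h) :
    f (g, h) = f (h, g) := by
  obtain ⟨u, rfl⟩ := hf
  change u h - u (g * h) + u g = u g - u (h * g) + u h
  rw [hgh.eq]
  abel

theorem nontrivial_groupCohomology_two_trivial_of_commute {f : G × G → A}
    (hf : f ∈ cocycles₂ (Rep.trivial k G A)) {g h : G} (hgh : Commute g h)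
    (hne : f (g, h) ≠ f (h, g)) : Nontrivial (groupCohomology (Rep.trivial k G A) 2) := by
  refine ⟨H2π _ ⟨f, hf⟩, 0, fun hzero ↦ hne ?_⟩
  exact apply_eq_apply_swap_of_mem_coboundaries₂_trivial ((H2π_eq_zero_iff _).1 hzero) hgh

end TrivialCoefficients

section SemidirectProduct

variable {N Q : Type*} [Group N] [Group Q] {φ : Q →* MulAut N}

theorem commute_inr_inl_of_apply_eq {q : Q} {n : N} (hn : φ q n = n) :
    Commute (inr q : N ⋊[φ] Q) (inl n) := by
  ext <;> simp [hn]

/-- The `2`-cochain `((m, q), (n, r)) ↦ β q n` on `N ⋊ Q` attached to a family of homomorphisms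
`β q : N → A`. It is a cocycle when `β` is a crossed homomorphism from `Q` to `Hom(N, A)`, and
then represents the image of the class of `β` in `H¹(Q, Hom(N, A))`. -/
def semidirectCochain {A : Type*} [AddCommGroup A] (β : Q → N →* Multiplicative A)
    (x : (N ⋊[φ] Q) × (N ⋊[φ] Q)) : A :=
  (β x.1.right x.2.left).toAdd

end SemidirectProduct

section CrossedHom

variable {k A : Type max u v} {N : Type u} {Q : Type v} [CommRing k] [Group N] [Group Q]
  [AddCommGroup A] [Module k A] {φ : Q →* MulAut N} {β : Q → N →* Multiplicative A}

theorem semidirectCochain_mem_cocycles₂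
    (hβ : ∀ q r n, β (q * r) n = β q (φ r n) * β r n) :
    semidirectCochain β ∈ cocycles₂ (Rep.trivial k (N ⋊[φ] Q) A) := by
  rw [mem_cocycles₂_iff]
  intro x y z
  change semidirectCochain β (x * y, z) + semidirectCochain β (x, y) =
    semidirectCochain β (y, z) + semidirectCochain β (x, y * z)
  simp only [semidirectCochain, mul_left, mul_right, hβ, map_mul, toAdd_mul]
  abel

theorem nontrivial_groupCohomology_two_semidirectProduct_of_crossedHom
    (hβ : ∀ q r n, β (q * r) n = β q (φ r n) * β r n) {q : Q} {n : N} (hn : φ q n = n)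
    (hne : β q n ≠ 1) : Nontrivial (groupCohomology (Rep.trivial k (N ⋊[φ] Q) A) 2) := by
  refine nontrivial_groupCohomology_two_trivial_of_commute (semidirectCochain_mem_cocycles₂ hβ)
    (commute_inr_inl_of_apply_eq hn) ?_
  simpa [semidirectCochain] using hne

end CrossedHom

section Shear

variable {N C : Type*} [Group N] [CommGroup C]

/-- The automorphism `(n, c) ↦ (σ n, c * χ n)` of `N × C`, by which the generator of `ℤ` acts in
the central extension of `N ⋊ ℤ` by `C` determined by `χ`. -/
def shearAut (σ : MulAut N) (χ : N →* C) : MulAut (N × C) where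
  toFun x := (σ x.1, x.2 * χ x.1)
  invFun x := (σ⁻¹ x.1, x.2 / χ (σ⁻¹ x.1))
  left_inv x := by simp
  right_inv x := by simp
  map_mul' x y := by simp [mul_mul_mul_comm]

/-- The homomorphism `N → C` that is the `C`-component of the `k`-th power of `shearAut σ χ`; as a
function of `k` it is the crossed homomorphism from `ℤ` to `Hom(N, C)` with value `χ` at `1`. -/
def zpowShear (σ : MulAut N) (χ : N →* C) (k : ℤ) : N →* C :=
  (MonoidHom.snd N C).comp ((shearAut σ χ ^ k).toMonoidHom.comp (MonoidHom.inl N C))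

variable (σ : MulAut N) (χ : N →* C)

theorem fst_shearAut_zpow_apply (k : ℤ) (x : N × C) :
    ((shearAut σ χ ^ k) x).1 = (σ ^ k) x.1 := by
  induction k generalizing x with
  | zero => rfl
  | succ i ih => rw [zpow_add_one, zpow_add_one, MulAut.mul_apply, ih]; rfl
  | pred i ih => rw [zpow_sub_one, zpow_sub_one, MulAut.mul_apply, ih]; rfl

theorem shearAut_zpow_one_mk (k : ℤ) (c : C) : (shearAut σ χ ^ k) (1, c) = (1, c) := by
  have hfix : shearAut σ χ ∈ MulAction.stabilizer (MulAut (N × C)) ((1, c) : N × C) :=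
    show (σ 1, c * χ 1) = (1, c) by simp
  exact zpow_mem hfix k

theorem shearAut_zpow_mk (k : ℤ) (n : N) (c : C) :
    (shearAut σ χ ^ k) (n, c) = ((σ ^ k) n, c * zpowShear σ χ k n) := by
  refine Prod.ext (fst_shearAut_zpow_apply σ χ k _) ?_
  have hsplit : ((n, c) : N × C) = (1, c) * (n, 1) := by simp
  rw [hsplit, map_mul, shearAut_zpow_one_mk]
  rfl

theorem zpowShear_one : zpowShear σ χ 1 = χ := by
  ext n
  exact one_mul (χ n)

theorem zpowShear_add (k l : ℤ) (n : N) :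
    zpowShear σ χ (k + l) n = zpowShear σ χ k ((σ ^ l) n) * zpowShear σ χ l n := by
  have hpow : (shearAut σ χ ^ (k + l)) (n, 1) =
      (shearAut σ χ ^ k) ((shearAut σ χ ^ l) (n, 1)) := by
    rw [zpow_add, MulAut.mul_apply]
  simp only [shearAut_zpow_mk, one_mul] at hpow
  exact (congrArg Prod.snd hpow).trans (mul_comm _ _)

end Shear

theorem nontrivial_groupCohomology_two_semidirectProduct_int {k N A : Type u} [CommRing k] [Group N]
    [AddCommGroup A] [Module k A] {φ : Multiplicative ℤ →* MulAut N}
    (χ : N →* Multiplicative A) {n : N} (hn : φ (Multiplicative.ofAdd 1) n = n) (hχ : χ n ≠ 1) :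
    Nontrivial (groupCohomology (Rep.trivial k (N ⋊[φ] Multiplicative ℤ) A) 2) := by
  let σ : MulAut N := φ (Multiplicative.ofAdd 1)
  refine nontrivial_groupCohomology_two_semidirectProduct_of_crossedHom
    (β := fun q ↦ zpowShear σ χ q.toAdd) (fun q r m ↦ ?_) hn ?_
  · rw [toAdd_mul, zpowShear_add, MonoidHom.apply_mint _ φ r]
  · rwa [toAdd_ofAdd, zpowShear_one]

theorem actSigma_ofAdd_one_apply (x : Nmul) :
    actSigma (Multiplicative.ofAdd 1) x = Multiplicative.ofAdd (sigmaAut x.toAdd) := by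
  simp [actSigma]

theorem second_cohomology_G1_nontrivial_general (k A : Type) [CommRing k] [AddCommGroup A]
    [Module k A] [Nontrivial A] :
    Nontrivial (groupCohomology (Rep.trivial k G1 A) 2) := by
  obtain ⟨c, hc⟩ := exists_ne (0 : A)
  let χ : Nmul →* Multiplicative A :=
    ((zmultiplesHom A c).comp (AddMonoidHom.fst ℤ ℤ)).toMultiplicative
  let n : Nmul := Multiplicative.ofAdd (1, 0)
  have hn : actSigma (Multiplicative.ofAdd 1) n = n := by
    rw [actSigma_ofAdd_one_apply]
    rfl
  have hχ : χ n ≠ 1 := by simpa [χ, n] using hc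
  exact nontrivial_groupCohomology_two_semidirectProduct_int χ hn hχ

/-- `H²(G₁, ℤ/p) ≠ 0` for `ℤ/p` a trivial `G₁`-module. -/
theorem second_cohomology_G1_nontrivial (p : ℕ) (hp : p.Prime) :
    Nontrivial (groupCohomology (Rep.trivial (ZMod p) G1 (ZMod p)) 2) :=
  have : Fact p.Prime := ⟨hp⟩
  second_cohomology_G1_nontrivial_general (ZMod p) (ZMod p)
end

section
/- Let p be a prime number, let N = ℤ × ℤ, let σ and τ be the automorphisms of N given by σ(a,b) = (a+b, b) and τ(a,b) = (a, a+b), let G1 = N ⋊_σ ℤ and G2 = N ⋊_τ ℤ, and let G = G1 *_N G2 be the free product of G1 and G2 amalgamating the common subgroup N. Then the second group cohomology of G with coefficients in ℤ/p regarded as a trivial G-module is nonzero: H²(G, ℤ/p) ≠ 0. -/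
/-- The automorphism `τ(a,b) = (a, a+b)` of `ℤ × ℤ`. -/
def tauAut : (ℤ × ℤ) ≃+ (ℤ × ℤ) where
  toFun x := (x.1, x.1 + x.2)
  invFun x := (x.1, x.2 - x.1)
  left_inv x := by simp
  right_inv x := by simp
  map_add' x y := by simp [Prod.ext_iff]; ring

/-- The action of `ℤ` on `N` in which `1` acts by `τ`. -/
def actTau : Multiplicative ℤ →* MulAut Nmul :=
  zpowersHom (MulAut Nmul) (AddEquiv.toMultiplicative tauAut)

/-- `G₂ = N ⋊_τ ℤ`. -/
abbrev G2 : Type := Nmul ⋊[actTau] Multiplicative ℤ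

/-- The two factors of the amalgamated product, indexed by `Bool`. -/
abbrev Gfam : Bool → Type := fun b => match b with
  | true => G1
  | false => G2

instance (b : Bool) : Group (Gfam b) := by cases b <;> dsimp [Gfam] <;> infer_instance

/-- The canonical inclusions of `N` into the two factors. -/
def incl : ∀ b : Bool, Nmul →* Gfam b := fun b => match b with
  | true => SemidirectProduct.inl
  | false => SemidirectProduct.inl

/-- `G = G₁ *_N G₂`, the free product amalgamating the common subgroup `N`. -/
abbrev Gamal : Type := Monoid.PushoutI incl

/-!
Let `s` be the generator of `ℤ ≤ G₁` and `e = (1, 0) ∈ N`. Since `σ` fixes `e`, the elements `s`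
and `e` commute, and for trivial coefficients a 2-coboundary takes the same value at `(s, e)` and
at `(e, s)`. So it suffices to find an integral 2-cocycle whose values there are `1` and `0`, and
to multiply it by a nonzero coefficient. Such a cocycle is a cup product: `G` acts on `N = ℤ²` by
conjugation, the identity of `N` extends to a crossed homomorphism `n : G → N` vanishing at the
stable letters, and because `G / N` is free there is a crossed homomorphism `c : G → N*` vanishing
on `N` whose value at `s` is the first coordinate. Pair `c` with `n` by evaluation.
-/

section Cocycles

open groupCohomology

universe u

variable {k G : Type u} [CommRing k] [Group G]

/-- The cup product `Z¹(G, A) × Z¹(G, B) → Z²(G, C)` along a `G`-equivariant pairing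
`β : A × B → C`, sending `(a, b)` to `(g, h) ↦ β(a(g), g • b(h))`. -/
def cupCocycle {A B C : Rep k G} (β : A →ₗ[k] B →ₗ[k] C)
    (hβ : ∀ g v w, β (A.ρ g v) (B.ρ g w) = C.ρ g (β v w))
    (a : cocycles₁ A) (b : cocycles₁ B) : cocycles₂ C :=
  ⟨fun x => β (a x.1) (B.ρ x.1 (b x.2)), by
    refine (mem_cocycles₂_iff _).2 fun g h j => ?_
    have ha : a (g * h) = A.ρ g (a h) + a g := (mem_cocycles₁_iff _).1 a.2 g h
    have hb : b (h * j) = B.ρ h (b j) + b h := (mem_cocycles₁_iff _).1 b.2 h j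
    simp only [ha, hb, map_mul, map_add, LinearMap.add_apply, Module.End.mul_apply, hβ]
    abel⟩

theorem cupCocycle_apply {A B C : Rep k G} (β : A →ₗ[k] B →ₗ[k] C)
    (hβ : ∀ g v w, β (A.ρ g v) (B.ρ g w) = C.ρ g (β v w))
    (a : cocycles₁ A) (b : cocycles₁ B) (g h : G) :
    cupCocycle β hβ a b (g, h) = β (a g) (B.ρ g (b h)) :=
  rfl

/-- The cup product of cocycles with values in `V*` and `V` along the evaluation pairing. -/
def evalCocycle {V : Type*} [AddCommGroup V] [Module k V] (ρ : Representation k G V)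
    (c : cocycles₁ (Rep.of ρ.dual)) (n : cocycles₁ (Rep.of ρ)) : cocycles₂ (Rep.trivial k G k) :=
  cupCocycle (A := Rep.of ρ.dual) (B := Rep.of ρ) (C := Rep.trivial k G k) LinearMap.id
    (fun g φ v => by simp [Representation.dual_apply, Module.Dual.transpose_apply]) c n

theorem evalCocycle_apply {V : Type*} [AddCommGroup V] [Module k V] (ρ : Representation k G V)
    (c : cocycles₁ (Rep.of ρ.dual)) (n : cocycles₁ (Rep.of ρ)) (g h : G) :
    evalCocycle ρ c n (g, h) = (c g : Module.Dual k V) (ρ g (n h)) :=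
  cupCocycle_apply ..

theorem apply_swap_of_mem_coboundaries₂ {A : Rep k G} [A.IsTrivial] {f : G × G → A}
    (hf : f ∈ coboundaries₂ A) {g h : G} (hgh : Commute g h) : f (g, h) = f (h, g) := by
  obtain ⟨φ, rfl⟩ := hf
  simp only [d₁₂_hom_apply, Representation.isTrivial_apply, hgh.eq]
  abel

theorem nontrivial_groupCohomology_two_of_commute {A : Rep.{u} k G} [A.IsTrivial]
    (f : cocycles₂ A) {g h : G} (hgh : Commute g h) (hf : f (g, h) ≠ f (h, g)) :
    Nontrivial (groupCohomology A 2) :=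
  ⟨H2π A f, 0, fun h0 => hf <|
    apply_swap_of_mem_coboundaries₂ ((H2π_eq_zero_iff f).1 h0) hgh⟩

/-- The image of an integral 2-cocycle under the homomorphism `ℤ → M`, `1 ↦ m`, of trivial
coefficient modules. -/
def smulCocycle (k : Type) {G : Type} {M : Type*} [CommRing k] [Group G] [AddCommGroup M]
    [Module k M] (f : cocycles₂ (Rep.trivial ℤ G ℤ)) (m : M) : cocycles₂ (Rep.trivial k G M) :=
  ⟨fun x => (f x : ℤ) • m, by
    refine (mem_cocycles₂_iff _).2 fun g h j => ?_
    have hf : (f (g * h, j) + f (g, h) : ℤ) = f (h, j) + f (g, h * j) :=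
      (mem_cocycles₂_iff _).1 f.2 g h j
    simp only [Representation.isTrivial_apply, ← add_smul, hf]⟩

theorem smulCocycle_apply (k : Type) {G : Type} {M : Type*} [CommRing k] [Group G]
    [AddCommGroup M] [Module k M] (f : cocycles₂ (Rep.trivial ℤ G ℤ)) (m : M) (x : G × G) :
    smulCocycle k f m x = (f x : ℤ) • m :=
  rfl

/-- The action of `G` on the multiplicative copy of a representation, as needed to form the
semidirect product `V ⋊ G`. -/
def multiplicativeAction {V : Type*} [AddCommGroup V] [Module k V] (ρ : Representation k G V) :
    G →* MulAut (Multiplicative V) where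
  toFun g := AddEquiv.toMultiplicative
    { toFun := ρ g
      invFun := ρ g⁻¹
      left_inv := ρ.inv_self_apply g
      right_inv := ρ.self_inv_apply g
      map_add' := map_add (ρ g) }
  map_one' := by ext v; exact congrArg (· v.toAdd) (map_one ρ)
  map_mul' g h := by ext v; exact congrArg (· v.toAdd) (map_mul ρ g h)

theorem multiplicativeAction_apply {V : Type*} [AddCommGroup V] [Module k V]
    (ρ : Representation k G V) (g : G) (v : V) :
    multiplicativeAction ρ g (.ofAdd v) = .ofAdd (ρ g v) :=
  rfl

/-- The 1-cocycle given by the first component of a section of `A ⋊ G → G`. -/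
def cocycleOfSection {A : Rep k G} (s : G →* Multiplicative A ⋊[multiplicativeAction A.ρ] G)
    (hs : SemidirectProduct.rightHom.comp s = MonoidHom.id G) : cocycles₁ A :=
  ⟨fun g => (s g).left.toAdd, by
    refine (mem_cocycles₁_iff _).2 fun g h => ?_
    have hg : (s g).right = g := DFunLike.congr_fun hs g
    rw [map_mul, SemidirectProduct.mul_left, hg, toAdd_mul, add_comm]
    rfl⟩

theorem cocycleOfSection_apply {A : Rep k G}
    (s : G →* Multiplicative A ⋊[multiplicativeAction A.ρ] G)
    (hs : SemidirectProduct.rightHom.comp s = MonoidHom.id G) (g : G) :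
    cocycleOfSection s hs g = (s g).left.toAdd :=
  rfl

end Cocycles

section Lifting

variable {N K : Type*} [Group N] [Group K] {α : MulAut N} {f : N →* K} {u : K}

theorem map_zpow_mulAut_apply (h : ∀ x, f (α x) = u * f x * u⁻¹) (n : ℤ) (x : N) :
    f ((α ^ n) x) = u ^ n * f x * (u ^ n)⁻¹ := by
  induction n generalizing x with
  | zero => simp
  | succ n ih => rw [zpow_add_one, zpow_add_one, MulAut.mul_apply, ih, h]; group
  | pred n ih =>
    have h_inv : f (α⁻¹ x) = u⁻¹ * f x * u := by
      have hx : f x = u * f (α⁻¹ x) * u⁻¹ := by rw [← h, MulAut.apply_inv_self]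
      rw [hx]
      group
    rw [zpow_sub_one, zpow_sub_one, MulAut.mul_apply, ih, h_inv]
    group

/-- The universal property of `N ⋊_α ℤ`: a homomorphism `f` out of `N` extends by sending the
generator of `ℤ` to `u` as soon as `u` induces `α` on the image of `f`. -/
def semidirectIntLift (α : MulAut N) (f : N →* K) (u : K) (h : ∀ x, f (α x) = u * f x * u⁻¹) :
    N ⋊[zpowersHom (MulAut N) α] Multiplicative ℤ →* K :=
  SemidirectProduct.lift f (zpowersHom K u) fun n =>
    MonoidHom.ext fun x => map_zpow_mulAut_apply h n.toAdd x

theorem semidirectIntLift_inl (h : ∀ x, f (α x) = u * f x * u⁻¹) (x : N) :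
    semidirectIntLift α f u h (SemidirectProduct.inl x) = f x :=
  SemidirectProduct.lift_inl ..

theorem semidirectIntLift_inr (h : ∀ x, f (α x) = u * f x * u⁻¹) :
    semidirectIntLift α f u h (SemidirectProduct.inr (Multiplicative.ofAdd 1)) = u := by
  simp [semidirectIntLift]

theorem semidirectInt_inl_mulAut (α : MulAut N) (x : N) :
    (SemidirectProduct.inl (α x) : N ⋊[zpowersHom (MulAut N) α] Multiplicative ℤ) =
      SemidirectProduct.inr (Multiplicative.ofAdd 1) * SemidirectProduct.inl x *
        (SemidirectProduct.inr (Multiplicative.ofAdd 1))⁻¹ := by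
  simpa using SemidirectProduct.inl_aut (φ := zpowersHom (MulAut N) α) (Multiplicative.ofAdd 1) x

theorem semidirectInt_hom_ext {F F' : N ⋊[zpowersHom (MulAut N) α] Multiplicative ℤ →* K}
    (hN : ∀ x, F (SemidirectProduct.inl x) = F' (SemidirectProduct.inl x))
    (hℤ : F (SemidirectProduct.inr (Multiplicative.ofAdd 1)) =
      F' (SemidirectProduct.inr (Multiplicative.ofAdd 1))) : F = F' :=
  SemidirectProduct.hom_ext (MonoidHom.ext hN) (MonoidHom.ext_mint hℤ)

end Lifting

namespace Gamal

open Monoid groupCohomology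

/-- The automorphisms `σ` and `τ`, indexed like the factors of the amalgam. -/
def shear : Bool → (ℤ × ℤ) ≃+ (ℤ × ℤ)
  | true => sigmaAut
  | false => tauAut

/-- `Gamal.shear` for the multiplicative notation. -/
abbrev mulShear (b : Bool) : MulAut Nmul :=
  AddEquiv.toMultiplicative (shear b)

/-- The generator of the factor `ℤ` of `Gfam b`. -/
def factorLetter : ∀ b : Bool, Gfam b
  | true => (SemidirectProduct.inr (Multiplicative.ofAdd 1) : G1)
  | false => (SemidirectProduct.inr (Multiplicative.ofAdd 1) : G2)

/-- The stable letters of the amalgam: conjugation by them induces `σ` and `τ` on `N`. -/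
def letter (b : Bool) : Gamal :=
  PushoutI.of b (factorLetter b)

/-- The inclusion of the amalgamated subgroup. -/
abbrev base : Nmul →* Gamal :=
  PushoutI.base incl

theorem incl_mulShear (b : Bool) (x : Nmul) :
    incl b (mulShear b x) = factorLetter b * incl b x * (factorLetter b)⁻¹ := by
  cases b
  · exact semidirectInt_inl_mulAut (mulShear false) x
  · exact semidirectInt_inl_mulAut (mulShear true) x

theorem base_mulShear (b : Bool) (x : Nmul) :
    base (mulShear b x) = letter b * base x * (letter b)⁻¹ := by
  simp only [letter, base, ← PushoutI.of_apply_eq_base incl b, incl_mulShear, map_mul, map_inv]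

section Lift

variable {K : Type*} [Group K]

theorem hom_ext {F F' : Gamal →* K} (hbase : ∀ x, F (base x) = F' (base x))
    (hletter : ∀ b, F (letter b) = F' (letter b)) : F = F' := by
  have hincl (b : Bool) (x : Nmul) :
      F (PushoutI.of b (incl b x)) = F' (PushoutI.of b (incl b x)) := by
    simpa only [PushoutI.of_apply_eq_base] using hbase x
  refine PushoutI.hom_ext_nonempty fun b => ?_
  cases b
  · exact semidirectInt_hom_ext (α := mulShear false) (hincl false) (hletter false)
  · exact semidirectInt_hom_ext (α := mulShear true) (hincl true) (hletter true)

variable {f : Nmul →* K} {u : Bool → K}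

/-- The restriction of `Gamal.lift` to the factor `Gfam b`. -/
def factorLift (h : ∀ b x, f (mulShear b x) = u b * f x * (u b)⁻¹) : ∀ b, Gfam b →* K
  | true => semidirectIntLift (mulShear true) f (u true) (h true)
  | false => semidirectIntLift (mulShear false) f (u false) (h false)

theorem factorLift_incl (h : ∀ b x, f (mulShear b x) = u b * f x * (u b)⁻¹) (b : Bool) (x : Nmul) :
    factorLift h b (incl b x) = f x := by
  cases b <;> exact semidirectIntLift_inl (h _) x

theorem factorLift_factorLetter (h : ∀ b x, f (mulShear b x) = u b * f x * (u b)⁻¹) (b : Bool) :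
    factorLift h b (factorLetter b) = u b := by
  cases b <;> exact semidirectIntLift_inr (h _)

/-- The universal property of the amalgam in terms of `N` and the stable letters. -/
def lift (f : Nmul →* K) (u : Bool → K) (h : ∀ b x, f (mulShear b x) = u b * f x * (u b)⁻¹) :
    Gamal →* K :=
  PushoutI.lift (factorLift h) f fun b => MonoidHom.ext (factorLift_incl h b)

theorem lift_base (h : ∀ b x, f (mulShear b x) = u b * f x * (u b)⁻¹) (x : Nmul) :
    lift f u h (base x) = f x :=
  PushoutI.lift_base ..

theorem lift_letter (h : ∀ b x, f (mulShear b x) = u b * f x * (u b)⁻¹) (b : Bool) :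
    lift f u h (letter b) = u b :=
  (PushoutI.lift_of ..).trans (factorLift_factorLetter h b)

end Lift

-- A cocycle `D` is the same as the section `g ↦ (D g, g)` of `A ⋊ G → G`, and such a section can
-- be prescribed on `N` and on the stable letters.
theorem exists_cocycle {k : Type} [CommRing k] {A : Rep k Gamal} (ι : ℤ × ℤ →+ A) (v : Bool → A)
    (hbase : ∀ x, A.ρ (base x) = 1) (hι : ∀ b x, ι (shear b x) = A.ρ (letter b) (ι x)) :
    ∃ D : cocycles₁ A, (∀ x, D (base (.ofAdd x)) = ι x) ∧ ∀ b, D (letter b) = v b := by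
  let f : Nmul →* Multiplicative A ⋊[multiplicativeAction A.ρ] Gamal :=
    { toFun x := ⟨.ofAdd (ι x.toAdd), base x⟩
      map_one' := by ext <;> simp
      map_mul' x y := by ext <;> simp [multiplicativeAction_apply, hbase] }
  let u (b : Bool) : Multiplicative A ⋊[multiplicativeAction A.ρ] Gamal :=
    ⟨.ofAdd (v b), letter b⟩
  have hfu (b : Bool) (x : Nmul) : f (mulShear b x) = u b * f x * (u b)⁻¹ := by
    rw [eq_mul_inv_iff_mul_eq]
    ext
    · simp [f, u, multiplicativeAction_apply, hbase, hι, add_comm]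
    · exact eq_mul_inv_iff_mul_eq.1 (base_mulShear b x)
  have hsection : SemidirectProduct.rightHom.comp (lift f u hfu) = MonoidHom.id Gamal := by
    refine hom_ext (fun x => ?_) (fun b => ?_)
    · exact congrArg SemidirectProduct.right (lift_base hfu x)
    · exact congrArg SemidirectProduct.right (lift_letter hfu b)
  refine ⟨cocycleOfSection (lift f u hfu) hsection, fun x => ?_, fun b => ?_⟩
  · rw [cocycleOfSection_apply, lift_base]
    rfl
  · rw [cocycleOfSection_apply, lift_letter]
    rfl

/-- The action of the amalgam on `N = ℤ²` by conjugation, defined by its values on generators: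
`N` is abelian, so it acts trivially, and the stable letters act by `σ` and `τ`. -/
def conjRep : Representation ℤ Gamal (ℤ × ℤ) :=
  LinearEquiv.automorphismGroup.toLinearMapMonoidHom.comp
    (lift 1 (fun b => (shear b).toIntLinearEquiv) (by simp))

theorem conjRep_base (x : Nmul) : conjRep (base x) = 1 := by
  rw [conjRep, MonoidHom.comp_apply, lift_base, MonoidHom.one_apply, map_one]

theorem conjRep_letter (b : Bool) (v : ℤ × ℤ) : conjRep (letter b) v = shear b v := by
  rw [conjRep, MonoidHom.comp_apply, lift_letter]
  rfl

theorem exists_base_cocycle :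
    ∃ n : cocycles₁ (Rep.of conjRep), ∀ x, n (base (.ofAdd x)) = x := by
  obtain ⟨n, hn, -⟩ := exists_cocycle (A := Rep.of conjRep) (AddMonoidHom.id _) 0 conjRep_base
    fun b x => (conjRep_letter b x).symm
  exact ⟨n, hn⟩

theorem exists_dual_cocycle (φ : Bool → Module.Dual ℤ (ℤ × ℤ)) :
    ∃ c : cocycles₁ (Rep.of conjRep.dual), (∀ x, c (base x) = 0) ∧ ∀ b, c (letter b) = φ b :=
  exists_cocycle (A := Rep.of conjRep.dual) 0 φ
    (fun x => by
      rw [Rep.of_ρ, Representation.dual_apply, ← map_inv, conjRep_base]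
      rfl)
    (fun b x => by simp)

theorem commute_letter_base {b : Bool} {x : ℤ × ℤ} (hx : shear b x = x) :
    Commute (letter b) (base (.ofAdd x)) := by
  have hconj : base (.ofAdd (shear b x)) = letter b * base (.ofAdd x) * (letter b)⁻¹ :=
    base_mulShear b (.ofAdd x)
  rw [hx] at hconj
  exact (eq_mul_inv_iff_mul_eq.1 hconj).symm

theorem exists_integral_cocycle :
    ∃ F : cocycles₂ (Rep.trivial ℤ Gamal ℤ),
      F (letter true, base (.ofAdd (1, 0))) = (1 : ℤ) ∧
        F (base (.ofAdd (1, 0)), letter true) = (0 : ℤ) := by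
  obtain ⟨n, hn⟩ := exists_base_cocycle
  obtain ⟨c, hcbase, hcletter⟩ := exists_dual_cocycle fun _ => LinearMap.fst ℤ ℤ ℤ
  refine ⟨evalCocycle conjRep c n, ?_, ?_⟩
  · rw [evalCocycle_apply, hcletter, hn, conjRep_letter]
    rfl
  · rw [evalCocycle_apply, hcbase]
    rfl

end Gamal

theorem second_cohomology_amalgam_nontrivial_general (k M : Type) [CommRing k] [AddCommGroup M]
    [Module k M] [Nontrivial M] : Nontrivial (groupCohomology (Rep.trivial k Gamal M) 2) := by
  obtain ⟨m, hm⟩ := exists_ne (0 : M)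
  obtain ⟨F, hF₁, hF₀⟩ := Gamal.exists_integral_cocycle
  have hfix : Gamal.shear true (1, 0) = (1, 0) := rfl
  refine nontrivial_groupCohomology_two_of_commute (smulCocycle k F m)
    (Gamal.commute_letter_base hfix) ?_
  rwa [smulCocycle_apply, smulCocycle_apply, hF₁, hF₀, one_smul, zero_smul]

/-- `H²(G₁ *_N G₂, ℤ/p) ≠ 0` for `ℤ/p` a trivial module. -/
theorem second_cohomology_amalgam_nontrivial (p : ℕ) (hp : p.Prime) :
    Nontrivial (groupCohomology (Rep.trivial (ZMod p) Gamal (ZMod p)) 2) := by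
  have := Fact.mk hp
  exact second_cohomology_amalgam_nontrivial_general (ZMod p) (ZMod p)
end
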